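/- Let A = [a_1, ..., a_n] ∈ ℝ^{m×n} be nonzero and let (B, N) be the canonical partition of {1,...,n} (B ∪ N = {1,...,n}, B ∩ N = ∅, A_B x_B = 0 with x_B > 0 is feasible, and A_N^T y > 0, A_B^T y = 0 is feasible). If B = ∅, then φ(Ā) ≥ ρ_N(A) for the augmented matrix Ā := [A 0] ∈ ℝ^{m×(n+1)}, where ρ_N(A) := max_{z ∈ ℝ^m, ‖z‖₂=1} min_{i ∈ N} ⟨a_i, z⟩ (here L = {0}, so L^⊥ = ℝ^m). -/

import Mathlib

open scoped RealInnerProductSpace BigOperators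

/-- `comb a x = A x`, the combination `∑ i, x i • a i` of the columns `a i` of `A`. -/
noncomputable def comb {m n : ℕ} (a : Fin n → EuclideanSpace ℝ (Fin m)) (x : Fin n → ℝ) :
    EuclideanSpace ℝ (Fin m) := ∑ i, x i • a i

/-- `φ(A, x) = sup {λ > 0 : ∃ u v ∈ Δ_{n-1}, S(u) ⊆ S(x), Au - Av = (λ/‖Ax‖) Ax}`. -/
noncomputable def phiAt {m n : ℕ} (a : Fin n → EuclideanSpace ℝ (Fin m))
    (x : Fin n → ℝ) : ℝ :=
  sSup {lam : ℝ | 0 < lam ∧ ∃ u ∈ stdSimplex ℝ (Fin n), ∃ v ∈ stdSimplex ℝ (Fin n),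
    (∀ i, 0 < u i → 0 < x i) ∧
    comb a u - comb a v = (lam / ‖comb a x‖) • comb a x}

/-- The restricted width `φ(A) = min {φ(A, x) : x ≥ 0, Ax ≠ 0}`. -/
noncomputable def phi {m n : ℕ} (a : Fin n → EuclideanSpace ℝ (Fin m)) : ℝ :=
  sInf {t : ℝ | ∃ x : Fin n → ℝ, (∀ i, 0 ≤ x i) ∧ comb a x ≠ 0 ∧ t = phiAt a x}

lemma comb_norm_le {m n : ℕ} (a : Fin n → EuclideanSpace ℝ (Fin m)) (u : Fin n → ℝ)
    (hu : u ∈ stdSimplex ℝ (Fin n)) : ‖comb a u‖ ≤ ∑ i, ‖a i‖ := by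
  unfold comb
  refine (norm_sum_le _ _).trans (Finset.sum_le_sum fun i _ => ?_)
  have h0 := hu.1 i
  have h1 : u i ≤ 1 := by
    rw [← hu.2]
    exact Finset.single_le_sum (fun j _ => hu.1 j) (Finset.mem_univ i)
  rw [norm_smul, Real.norm_of_nonneg h0]
  exact mul_le_of_le_one_left (norm_nonneg _) h1

lemma phiAt_bdd {m n : ℕ} (a : Fin n → EuclideanSpace ℝ (Fin m))
    (x : Fin n → ℝ) (hx : comb a x ≠ 0) :
  BddAbove {lam : ℝ | 0 < lam ∧ ∃ u ∈ stdSimplex ℝ (Fin n), ∃ v ∈ stdSimplex ℝ (Fin n),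
    (∀ i, 0 < u i → 0 < x i) ∧
    comb a u - comb a v = (lam / ‖comb a x‖) • comb a x} := by
  refine ⟨∑ i, ‖a i‖ + ∑ i, ‖a i‖, ?_⟩
  rintro lam ⟨hl, u, hu, v, hv, -, h⟩
  have hn : 0 < ‖comb a x‖ := norm_pos_iff.mpr hx
  have h2 : ‖comb a u - comb a v‖ = lam := by
    rw [h, norm_smul, Real.norm_of_nonneg (by positivity)]
    field_simp
  rw [← h2]
  exact (norm_sub_le _ _).trans (add_le_add (comb_norm_le a u hu) (comb_norm_le a v hv))

lemma comb_snoc {m n : ℕ} (a : Fin n → EuclideanSpace ℝ (Fin m)) (x : Fin (n + 1) → ℝ) :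
    comb (Fin.snoc a (0 : EuclideanSpace ℝ (Fin m))) x = ∑ i : Fin n, x i.castSucc • a i := by
  unfold comb
  rw [Fin.sum_univ_castSucc]
  simp

/-- for the canonical partition `(B, N)` of a nonzero matrix `A`, if
`B = ∅` then `φ(Ā) ≥ ρ_N(A)` for the augmented matrix `Ā = [A 0]`, where
`ρ_N(A) = max_{‖z‖=1} min_{i ∈ N} ⟪a i, z⟫` (here `L = {0}`, so `L^⊥ = ℝ^m`). -/
theorem stmt16 (m n : ℕ) (hn : 0 < n) (a : Fin n → EuclideanSpace ℝ (Fin m))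
    (hA : ∃ i, a i ≠ 0) (B N : Finset (Fin n))
    (hBN : B ∪ N = Finset.univ) (hdisj : B ∩ N = ∅)
    (hB : ∃ xB : Fin n → ℝ, (∀ i ∈ B, 0 < xB i) ∧ ∑ i ∈ B, xB i • a i = 0)
    (hN : ∃ y : EuclideanSpace ℝ (Fin m),
      (∀ i ∈ N, 0 < ⟪a i, y⟫) ∧ ∀ i ∈ B, ⟪a i, y⟫ = 0)
    (hBempty : B = ∅) (ρN : ℝ)
    (hρN : IsGreatest
      {t : ℝ | ∃ z : EuclideanSpace ℝ (Fin m), ‖z‖ = 1 ∧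
        t = sInf {s : ℝ | ∃ i ∈ N, s = ⟪a i, z⟫}} ρN) :
    ρN ≤ phi (Fin.snoc a (0 : EuclideanSpace ℝ (Fin m))) := by
  have hNu : ∀ i, i ∈ N := by
    intro i
    have := Finset.mem_univ i
    rw [← hBN, hBempty] at this
    simpa using this
  obtain ⟨⟨z, hz, hρ⟩, -⟩ := hρN
  have hz' : ∀ i, ρN ≤ ⟪a i, z⟫ := by
    intro i
    rw [hρ]
    refine csInf_le ?_ ⟨i, hNu i, rfl⟩
    have : {s : ℝ | ∃ i ∈ N, s = ⟪a i, z⟫} ⊆ Set.range (fun i => ⟪a i, z⟫) := by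
      rintro s ⟨i, -, rfl⟩
      exact ⟨i, rfl⟩
    exact ((Set.finite_range _).subset this).bddBelow
  unfold phi
  refine le_csInf ?_ ?_
  · obtain ⟨i, hi⟩ := hA
    refine ⟨_, Pi.single i.castSucc 1, ?_, ?_, rfl⟩
    · intro j
      exact (Pi.single_nonneg.mpr zero_le_one : (0 : Fin (n+1) → ℝ) ≤ _) j
    · rw [comb_snoc, Finset.sum_eq_single i]
      · simpa using hi
      · intro j _ hj
        rw [Pi.single_eq_of_ne (fun h => hj (Fin.castSucc_injective _ h)), zero_smul]
      · simp
  · rintro t ⟨x, hx0, hx, rfl⟩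
    have hn' : 0 < ‖comb (Fin.snoc a (0 : EuclideanSpace ℝ (Fin m))) x‖ := norm_pos_iff.mpr hx
    set S : ℝ := ∑ i : Fin n, x i.castSucc with hS
    have hS0 : 0 ≤ S := Finset.sum_nonneg fun i _ => hx0 _
    have hSpos : 0 < S := by
      refine lt_of_le_of_ne hS0 fun h => hx ?_
      have h' := (Finset.sum_eq_zero_iff_of_nonneg (fun i _ => hx0 _)).mp h.symm
      rw [comb_snoc]
      exact Finset.sum_eq_zero fun i hi => by rw [h' i hi, zero_smul]
    have key : ρN * S ≤ ‖comb (Fin.snoc a (0 : EuclideanSpace ℝ (Fin m))) x‖ := by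
      have h1 := real_inner_le_norm (comb (Fin.snoc a (0 : EuclideanSpace ℝ (Fin m))) x) z
      rw [hz, mul_one] at h1
      refine le_trans ?_ h1
      rw [comb_snoc, sum_inner, hS, Finset.mul_sum]
      refine Finset.sum_le_sum fun i _ => ?_
      rw [real_inner_smul_left, mul_comm]
      exact mul_le_mul_of_nonneg_left (hz' i) (hx0 _)
    refine le_trans ((le_div_iff₀ hSpos).mpr key) ?_
    refine le_csSup (phiAt_bdd _ x hx) ⟨by positivity,
      Fin.snoc (fun i : Fin n => x i.castSucc / S) (0 : ℝ), ⟨?_, ?_⟩,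
      Pi.single (Fin.last n) 1, single_mem_stdSimplex ℝ _, ?_, ?_⟩
    · intro i
      refine Fin.lastCases ?_ (fun i => ?_) i
      · simp
      · simpa using div_nonneg (hx0 _) hS0
    · rw [Fin.sum_univ_castSucc]
      simp only [Fin.snoc_castSucc, Fin.snoc_last, add_zero]
      rw [← Finset.sum_div, ← hS, div_self hSpos.ne']
    · intro i
      refine Fin.lastCases ?_ (fun i => ?_) i
      · simp
      · intro h
        simp only [Fin.snoc_castSucc] at h
        exact (div_pos_iff_of_pos_right hSpos).mp h
    · have e1 : comb (Fin.snoc a (0 : EuclideanSpace ℝ (Fin m)))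
          (Pi.single (Fin.last n) 1) = 0 := by
        rw [comb_snoc]
        refine Finset.sum_eq_zero fun i _ => ?_
        rw [Pi.single_eq_of_ne (Fin.castSucc_lt_last i).ne, zero_smul]
      rw [e1, sub_zero, div_right_comm, div_self hn'.ne']
      rw [comb_snoc, comb_snoc, Finset.smul_sum]
      refine Finset.sum_congr rfl fun i _ => ?_
      rw [smul_smul]
      simp only [Fin.snoc_castSucc]
      congr 1
      ring
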